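/- Context compatibility is an equivalence relation: on the collection of all contexts for a finite-dimensional complex Hilbert space ℋ, the relation 'every operator in the first context commutes with every operator in the second context' is reflexive, symmetric, and transitive. -/

import Mathlib

/-!
Transitivity is the only property with content. By the spectral theorem for commuting symmetric
operators, the joint eigenspaces of a context `ℬ` span `H`, and by the definition of a context each
of them is at most one-dimensional. An operator commuting with `ℬ` preserves these joint
eigenspaces, so it acts on each joint eigenvector as a scalar
(`IsContext.exists_eq_smul_of_forall_commute`). Hence two operators commuting with `ℬ` are
simultaneously diagonal and commute with each other (`IsContext.commute_of_forall_commute`).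
-/

/-- A context for a finite-dimensional complex Hilbert space `H`: a finite set
of pairwise-commuting self-adjoint (symmetric) operators on `H` such that any
two nonzero common eigenvectors with the same eigenvalue under every operator
in the set are scalar multiples of each other. -/
def IsContext (H : Type*) [NormedAddCommGroup H] [InnerProductSpace ℂ H]
    (𝒜 : Set (H →ₗ[ℂ] H)) : Prop :=
  𝒜.Finite ∧
  (∀ A ∈ 𝒜, LinearMap.IsSymmetric A) ∧
  (∀ A ∈ 𝒜, ∀ B ∈ 𝒜, Commute A B) ∧
  ∀ v w : H, v ≠ 0 → w ≠ 0 →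
    (∀ A ∈ 𝒜, ∃ a : ℂ, A v = a • v ∧ A w = a • w) →
    ∃ c : ℂ, w = c • v

/-- Two contexts are compatible if every operator in one commutes with every
operator in the other. -/
def ContextCompatible (H : Type*) [NormedAddCommGroup H] [InnerProductSpace ℂ H]
    (𝒜 ℬ : Set (H →ₗ[ℂ] H)) : Prop :=
  ∀ A ∈ 𝒜, ∀ B ∈ ℬ, Commute A B

open Module.End in
/-- An operator commuting with a context maps each joint eigenspace to itself; as this space is at
most one-dimensional, the operator acts on it as a scalar. -/
theorem IsContext.exists_eq_smul_of_forall_commute {H : Type*} [NormedAddCommGroup H]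
    [InnerProductSpace ℂ H] {ℬ : Set (H →ₗ[ℂ] H)} (hℬ : IsContext H ℬ) {T : H →ₗ[ℂ] H}
    (hT : ∀ B ∈ ℬ, Commute T B) {χ : ℬ → ℂ} {v : H}
    (hv : v ∈ ⨅ B : ℬ, eigenspace (B : H →ₗ[ℂ] H) (χ B)) : ∃ c : ℂ, T v = c • v := by
  by_cases hv0 : v = 0
  · exact ⟨0, by simp [hv0]⟩
  by_cases hTv : T v = 0
  · exact ⟨0, by simp [hTv]⟩
  refine hℬ.2.2.2 v (T v) hv0 hTv fun B hB => ⟨χ ⟨B, hB⟩, ?_⟩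
  have hBv : B v = χ ⟨B, hB⟩ • v :=
    mem_eigenspace_iff.mp ((Submodule.mem_iInf _).mp hv ⟨B, hB⟩)
  refine ⟨hBv, ?_⟩
  have hcomm : T (B v) = B (T v) := LinearMap.congr_fun (hT B hB).eq v
  rw [← hcomm, hBv, map_smul]

open Module.End in
/-- The commutant of a context is commutative. -/
theorem IsContext.commute_of_forall_commute {H : Type*} [NormedAddCommGroup H]
    [InnerProductSpace ℂ H] [FiniteDimensional ℂ H] {ℬ : Set (H →ₗ[ℂ] H)} (hℬ : IsContext H ℬ)
    {S T : H →ₗ[ℂ] H} (hS : ∀ B ∈ ℬ, Commute S B) (hT : ∀ B ∈ ℬ, Commute T B) :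
    Commute S T := by
  have htop : ⨆ χ : ℬ → ℂ, ⨅ B : ℬ, eigenspace (B : H →ₗ[ℂ] H) (χ B) = ⊤ :=
    LinearMap.IsSymmetric.iSup_iInf_eq_top_of_commute (T := fun B : ℬ => (B : H →ₗ[ℂ] H))
      (fun B => hℬ.2.1 B B.2) fun A B _ => hℬ.2.2.1 A A.2 B B.2
  -- It suffices that the subspace where `S * T` and `T * S` agree contains every joint eigenspace.
  refine LinearMap.eqLocus_eq_top.mp (eq_top_iff.mpr (htop ▸ iSup_le fun χ v hv => ?_))
  obtain ⟨s, hs⟩ := hℬ.exists_eq_smul_of_forall_commute hS hv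
  obtain ⟨t, ht⟩ := hℬ.exists_eq_smul_of_forall_commute hT hv
  simp [LinearMap.mem_eqLocus, hs, ht, smul_comm s t]

/-- Context compatibility is an equivalence relation on the
collection of all contexts for a finite-dimensional complex Hilbert space. -/
theorem contextCompatible_equivalence (H : Type*) [NormedAddCommGroup H]
    [InnerProductSpace ℂ H] [FiniteDimensional ℂ H] :
    Equivalence (fun 𝒜 ℬ : {𝒞 : Set (H →ₗ[ℂ] H) // IsContext H 𝒞} =>
      ContextCompatible H 𝒜.1 ℬ.1) := by
  refine ⟨fun 𝒜 => 𝒜.2.2.2.1, fun h B hB A hA => (h A hA B hB).symm, ?_⟩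
  intro 𝒜 ℬ 𝒞 h₁ h₂ A hA C hC
  exact ℬ.2.commute_of_forall_commute (h₁ A hA) fun B hB => (h₂ B hB C hC).symm
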